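/- arXiv:cs/0108011 — 2 statements merged into one kernel-verified Lean document; each statement's English description precedes it below -/
import Mathlib

section
/- Let X be a finite set equipped with a non-trivial neighborhood relation n, let Y be a finite set equipped with a metric d_Y, and let F be a non-empty subset of Y^X. Define the maximum steepness of f as s_max(f) = max over pairs x_i, x_j with n(x_i,x_j) = 1 of d_Y(f(x_i), f(x_j)), and the diameter of the range of f as d_max(f) = max over all pairs x_i, x_j ∈ X of d_Y(f(x_i), f(x_j)). If s_max(f) < max_{g ∈ F} d_max(g) for every f ∈ F, then F is not closed under permutation. -/
/-!
If `F` were closed under permutation, take `g ∈ F` of largest range diameter, and points `a`, `b`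
at which this diameter is attained. A permutation moving two distinct neighbors to `a` and `b`
turns `g` into a function of `F` whose steepness is at least that diameter, against the hypothesis.
If `a = b` the diameter is zero, which is at most the steepness of `g` itself.
-/

/-- Maximum steepness of `f` w.r.t. the neighborhood relation `n`:
the largest distance between values of `f` at neighboring points. -/
noncomputable def maxSteepness {X Y : Type*} [MetricSpace Y]
    (n : X × X → Fin 2) (f : X → Y) : ℝ :=
  ⨆ p : {p : X × X // n p = 1}, dist (f p.1.1) (f p.1.2)

/-- Diameter of the range of `f`: the largest distance between any two values of `f`. -/
noncomputable def rangeDiameter {X Y : Type*} [MetricSpace Y] (f : X → Y) : ℝ :=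
  ⨆ p : X × X, dist (f p.1) (f p.2)

lemma dist_le_maxSteepness {X Y : Type*} [Finite X] [MetricSpace Y]
    (n : X × X → Fin 2) (f : X → Y) {a b : X} (h : n (a, b) = 1) :
    dist (f a) (f b) ≤ maxSteepness n f :=
  le_ciSup (f := fun p : {p : X × X // n p = 1} => dist (f p.1.1) (f p.1.2))
    (Set.finite_range _).bddAbove ⟨(a, b), h⟩

lemma exists_perm_map_pair {X : Type*} {x y a b : X} (hxy : x ≠ y) (hab : a ≠ b) :
    ∃ π : Equiv.Perm X, π x = a ∧ π y = b := by
  classical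
  refine ⟨Equiv.swap (Equiv.swap x a y) b * Equiv.swap x a, ?_, ?_⟩
  · have h : a ≠ Equiv.swap x a y := by
      intro h
      apply hxy
      apply (Equiv.swap x a).injective
      rw [← h, Equiv.swap_apply_left]
    rw [Equiv.Perm.mul_apply, Equiv.swap_apply_left, Equiv.swap_apply_of_ne_of_ne h hab]
  · rw [Equiv.Perm.mul_apply, Equiv.swap_apply_left]

/-- If `X` carries a non-trivial neighborhood relation and every `f` in a
non-empty family `F` of functions `X → Y` (with `Y` a finite metric space) has maximum
steepness strictly smaller than the maximal range-diameter over `F`, then `F` is not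
closed under permutation. -/
theorem stmt_6 (X Y : Type*) [Fintype X] [Fintype Y] [MetricSpace Y]
    (n : X × X → Fin 2) (hsym : ∀ a b : X, n (a, b) = n (b, a))
    (h1 : ∃ xi xj : X, xi ≠ xj ∧ n (xi, xj) = 1)
    (h0 : ∃ xk xl : X, xk ≠ xl ∧ n (xk, xl) = 0)
    (F : Set (X → Y)) (hne : F.Nonempty)
    (hsteep : ∀ f ∈ F, maxSteepness n f < ⨆ g : F, rangeDiameter (g : X → Y)) :
    ¬ (∀ (π : Equiv.Perm X), ∀ f ∈ F, f ∘ π ∈ F) := by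
  intro hcup
  obtain ⟨x, y, hxy, hn⟩ := h1
  have : Nonempty F := hne.to_subtype
  have : Nonempty (X × X) := ⟨(x, y)⟩
  obtain ⟨⟨g, hg⟩, hgmax⟩ := exists_eq_ciSup_of_finite (f := fun g : F => rangeDiameter (g : X → Y))
  obtain ⟨⟨a, b⟩, hgab⟩ := exists_eq_ciSup_of_finite (f := fun p : X × X => dist (g p.1) (g p.2))
  have hsup : dist (g a) (g b) = ⨆ g : F, rangeDiameter (g : X → Y) := hgab.trans hgmax
  rw [← hsup] at hsteep
  by_cases hab : a = b
  · have h := hsteep g hg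
    rw [hab, dist_self] at h
    exact absurd (dist_nonneg.trans (dist_le_maxSteepness n g hn)) h.not_ge
  · obtain ⟨π, rfl, rfl⟩ := exists_perm_map_pair hxy hab
    exact absurd (dist_le_maxSteepness n (g ∘ π) hn) (hsteep _ (hcup π g hg)).not_ge
end

section
/- Let X and Y be finite nonempty sets, 1 ≤ m ≤ |X|, and let F ⊆ Y^X be closed under permutation. Then for any two non-repeating deterministic black-box search algorithms a and b and any f_a ∈ F, there exists f_b ∈ F such that the traces coincide: Y(f_a, m, a) = Y(f_b, m, b). In particular, b achieves the same performance c(Y(f_b, m, b)) = c(Y(f_a, m, a)) for every performance measure c. -/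
/-!
A permutation `π` with `π xᵢᵇ = xᵢᵃ`, where `xᵢᵃ` are the points visited by `a` on `fa` and `xᵢᵇ`
those visited by `b` on `fa ∘ π`, makes the two traces equal, and `fa ∘ π ∈ F` by closure.
Such a `π` is built one step at a time (`exists_perm_run`): if `π` works for `k` steps, `x` is the
next point of `b` and `y` the next point of `a`, then `swap (π x) y * π` sends `x` to `y`. It agrees
with `π` on the points `b` has already visited, since `x` and `y` are both fresh, so
the first `k` steps of `b` are unaffected (`run_congr`).
-/

/-- The history produced after `m` steps by running the deterministic black-box search
algorithm `a` (which maps a history of explored points with their cost values to the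
next point) on the objective function `f`. -/
def run {X Y : Type*} (a : List (X × Y) → X) (f : X → Y) : ℕ → List (X × Y)
  | 0 => []
  | m + 1 => run a f m ++ [(a (run a f m), f (a (run a f m)))]

/-- The trace `Y(f, m, a) = ⟨f(x_1), …, f(x_m)⟩` of cost values seen by `a` on `f`. -/
def trace {X Y : Type*} (a : List (X × Y) → X) (f : X → Y) (m : ℕ) : List Y :=
  (run a f m).map Prod.snd

/-- `a` is a non-repeating black-box search algorithm: on any history of pairwise
distinct points (with fewer points than `|X|`) it proposes a fresh, unvisited point. -/
def NonRepeating {X Y : Type*} [Fintype X] (a : List (X × Y) → X) : Prop :=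
  ∀ T : List (X × Y), (T.map Prod.fst).Nodup → T.length < Fintype.card X →
    a T ∉ T.map Prod.fst

section

variable {X Y : Type*}

theorem run_length (a : List (X × Y) → X) (f : X → Y) (k : ℕ) : (run a f k).length = k := by
  induction k with
  | zero => rfl
  | succ k ih => simp [run, ih]

theorem NonRepeating.nodup_run [Fintype X] {a : List (X × Y) → X} (ha : NonRepeating a)
    (f : X → Y) {k : ℕ} (hk : k ≤ Fintype.card X) : ((run a f k).map Prod.fst).Nodup := by
  induction k with
  | zero => simp [run]
  | succ k ih =>
    have h := ih (by omega)
    have hfresh := ha _ h (by rw [run_length]; omega)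
    rw [run, List.map_append, List.nodup_append']
    refine ⟨h, by simp, ?_⟩
    simpa [List.disjoint_singleton] using hfresh

theorem NonRepeating.fresh [Fintype X] {a : List (X × Y) → X} (ha : NonRepeating a)
    (f : X → Y) {k : ℕ} (hk : k < Fintype.card X) :
    a (run a f k) ∉ (run a f k).map Prod.fst :=
  ha _ (ha.nodup_run f hk.le) (by rwa [run_length])

/-- A run depends on the objective function only through its values at the visited points. -/
theorem run_congr (a : List (X × Y) → X) {f g : X → Y} {k : ℕ}
    (h : ∀ x ∈ (run a f k).map Prod.fst, g x = f x) : run a g k = run a f k := by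
  induction k with
  | zero => rfl
  | succ k ih =>
    simp only [run, List.map_append, List.mem_append] at h
    have hk := ih fun x hx => h x (Or.inl hx)
    simp only [run, hk]
    rw [h _ (Or.inr (by simp))]

/-- Some relabelling `π` of the search space carries the run of `b` on `f ∘ π` to the run of `a`
on `f`, point by point. -/
theorem exists_perm_run [Fintype X] {a b : List (X × Y) → X} (ha : NonRepeating a)
    (hb : NonRepeating b) (f : X → Y) {k : ℕ} (hk : k ≤ Fintype.card X) :
    ∃ π : Equiv.Perm X, (run b (f ∘ π) k).map (Prod.map π id) = run a f k := by
  classical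
  induction k with
  | zero => exact ⟨1, rfl⟩
  | succ k ih =>
    obtain ⟨π, hπ⟩ := ih (by omega)
    have hx := hb.fresh (f ∘ π) (k := k) (by omega)
    have hy := ha.fresh f (k := k) (by omega)
    set R := run b (f ∘ π) k with hR
    set y := a (run a f k) with hydef
    let π' : Equiv.Perm X := Equiv.swap (π (b R)) y * π
    have hπ'x : π' (b R) = y := by simp [π']
    have hagree : ∀ z ∈ R.map Prod.fst, π' z = π z := by
      intro z hz
      refine Equiv.swap_apply_of_ne_of_ne ?_ ?_
      · intro h
        exact hx (π.injective h ▸ hz)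
      · rintro h
        apply hy
        rw [← h, ← hπ, List.map_map]
        obtain ⟨p, hp, rfl⟩ := List.mem_map.1 hz
        exact List.mem_map.2 ⟨p, hp, rfl⟩
    have hrun : run b (f ∘ π') k = R :=
      run_congr b fun z hz => congrArg f (hagree z hz)
    have hmap : R.map (Prod.map π' id) = run a f k := by
      rw [← hπ]
      refine List.map_congr_left fun p hp => ?_
      exact Prod.ext (hagree _ (List.mem_map_of_mem hp)) rfl
    refine ⟨π', ?_⟩
    simp only [run, hrun, List.map_append, hmap, List.map_cons, List.map_nil, Prod.map_apply,
      Function.comp_apply, hπ'x, id, ← hydef]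

end

/-- If `F ⊆ Y^X` is closed under permutation and `1 ≤ m ≤ |X|`, then for
any two non-repeating algorithms `a, b` and any `f_a ∈ F` there is an `f_b ∈ F` with
`Y(f_b, m, b) = Y(f_a, m, a)`; in particular `b` achieves on `f_b` the same performance
as `a` on `f_a` for every performance measure `c`. -/
theorem stmt_11 (X Y : Type*) [Fintype X] [Fintype Y] [Nonempty X] [Nonempty Y]
    (m : ℕ) (hm : 1 ≤ m) (hmX : m ≤ Fintype.card X) (F : Set (X → Y))
    (hF : ∀ (π : Equiv.Perm X), ∀ f ∈ F, f ∘ π ∈ F)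
    (a b : List (X × Y) → X) (ha : NonRepeating a) (hb : NonRepeating b)
    (fa : X → Y) (hfa : fa ∈ F) :
    ∃ fb ∈ F, trace b fb m = trace a fa m ∧
      ∀ c : List Y → ℝ, c (trace b fb m) = c (trace a fa m) := by
  obtain ⟨π, hπ⟩ := exists_perm_run ha hb fa hmX
  have htrace : trace b (fa ∘ π) m = trace a fa m := by
    rw [trace, trace, ← hπ, List.map_map]
    rfl
  exact ⟨fa ∘ π, hF π fa hfa, htrace, fun c => congrArg c htrace⟩
end
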